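/- Under the discrete inf-sup condition with constant β > 0, the error of the dual-corrected output is bounded by the product of the dual norms of the dual and primal residuals: |s^𝒩 − s_N^{pd}| ≤ β^{-1} ‖r^du‖_{(X^𝒩)'} ‖r^pr‖_{(X^𝒩)'}. -/

import Mathlib

/-- The dual norm of a functional `r` taken over a subspace `S`:
the supremum over `v ∈ S`, `v ≠ 0`, of `‖r v‖ / ‖v‖`. -/
noncomputable def dualNormOn {X : Type*} [NormedAddCommGroup X] [NormedSpace ℂ X]
    (S : Submodule ℂ X) (r : X → ℂ) : ℝ :=
  sSup {c : ℝ | ∃ v ∈ S, v ≠ 0 ∧ c = ‖r v‖ / ‖v‖}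

/-!
Put `e = u^𝒩 - u_N`. On `X^𝒩` the primal residual is `a(e, ·)`, so the correction `r^pr(w_N)` equals
`a(e, w_N)` and the output error is `-r^du(e)`, at most `‖r^du‖ ‖e‖`. The inf-sup condition at `e`
reads `β ‖e‖ ≤ ‖r^pr‖`.
-/

section

variable {X : Type*} [NormedAddCommGroup X] [NormedSpace ℂ X] {S : Submodule ℂ X}

theorem dualNormOn_nonneg {r : X → ℂ} : 0 ≤ dualNormOn S r := by
  refine Real.sSup_nonneg ?_
  rintro _ ⟨v, -, -, rfl⟩
  positivity

theorem dualNormOn_congr {r q : X → ℂ} (h : Set.EqOn r q S) : dualNormOn S r = dualNormOn S q := by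
  unfold dualNormOn
  congr! 5 with c v
  exact and_congr_right fun hv => by rw [h hv]

theorem norm_le_dualNormOn_mul_norm {r : X → ℂ} {C : ℝ} (hr : ∀ v ∈ S, ‖r v‖ ≤ C * ‖v‖)
    {v : X} (hv : v ∈ S) : ‖r v‖ ≤ dualNormOn S r * ‖v‖ := by
  rcases eq_or_ne v 0 with rfl | hv0
  · simpa using hr 0 hv
  · rw [← div_le_iff₀ (norm_pos_iff.mpr hv0)]
    refine le_csSup ⟨C, ?_⟩ ⟨v, hv, hv0, rfl⟩
    rintro _ ⟨w, hw, hw0, rfl⟩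
    exact (div_le_iff₀ (norm_pos_iff.mpr hw0)).mpr (hr w hw)

variable {a : X →L[ℂ] X →L[ℂ] ℂ} {f : X → ℂ} {u u' w' : X} {β : ℝ}

theorem norm_sub_le_inv_mul_dualNormOn_residual (hβ : 0 < β)
    (h_infsup : ∀ x ∈ S, β * ‖x‖ ≤ dualNormOn S (fun v => a x v))
    (hu : u ∈ S) (h_sol : ∀ v ∈ S, a u v = f v) (hu' : u' ∈ S) :
    ‖u - u'‖ ≤ β⁻¹ * dualNormOn S (fun v => f v - a u' v) := by
  have residual_eq : Set.EqOn (fun v => a (u - u') v) (fun v => f v - a u' v) S :=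
    fun v hv => by simp [h_sol v hv]
  rw [le_inv_mul_iff₀ hβ, ← dualNormOn_congr residual_eq]
  exact h_infsup _ (S.sub_mem hu hu')

theorem dual_corrected_output_error_bound_inf_sup_general (l : X →L[ℂ] ℂ) (hβ : 0 < β)
    (h_infsup : ∀ x ∈ S, β * ‖x‖ ≤ dualNormOn S (fun v => a x v))
    (hu : u ∈ S) (h_sol : ∀ v ∈ S, a u v = f v) (hu' : u' ∈ S) (hw' : w' ∈ S) :
    ‖l u - (l u' - (f w' - a u' w'))‖ ≤
      β⁻¹ * dualNormOn S (fun v => -l v - a v w') * dualNormOn S (fun v => f v - a u' v) := by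
  have error_eq : l u - (l u' - (f w' - a u' w')) = -(-l (u - u') - a (u - u') w') := by
    simp only [← h_sol w' hw', map_sub, sub_apply]
    ring
  calc ‖l u - (l u' - (f w' - a u' w'))‖
      = ‖-l (u - u') - a (u - u') w'‖ := by rw [error_eq, norm_neg]
    _ ≤ dualNormOn S (fun v => -l v - a v w') * ‖u - u'‖ :=
        norm_le_dualNormOn_mul_norm (r := fun v => -l v - a v w')
          (fun v _ => (-l - a.flip w').le_opNorm v) (S.sub_mem hu hu')
    _ ≤ dualNormOn S (fun v => -l v - a v w') *
          (β⁻¹ * dualNormOn S (fun v => f v - a u' v)) := by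
        gcongr
        · exact dualNormOn_nonneg
        · exact norm_sub_le_inv_mul_dualNormOn_residual hβ h_infsup hu h_sol hu'
    _ = β⁻¹ * dualNormOn S (fun v => -l v - a v w') *
          dualNormOn S (fun v => f v - a u' v) := by ring

end

/-- Under the discrete inf-sup condition with constant `β > 0`,
the error of the dual-corrected output is bounded by the product of the dual
norms of the dual and primal residuals:
`|s^𝒩 − s_N^{pd}| ≤ β⁻¹ ‖r^du‖_{(X^𝒩)'} ‖r^pr‖_{(X^𝒩)'}`,
where `s^𝒩 = l(u^𝒩)` and `s_N^{pd} = l(u_N) − r^pr(w_N)`. -/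
theorem dual_corrected_output_error_bound_inf_sup
    {X : Type*} [NormedAddCommGroup X] [NormedSpace ℂ X]
    (a : X →L[ℂ] X →L[ℂ] ℂ) (f l : X →L[ℂ] ℂ)
    (XN XNN : Submodule ℂ X) (h_sub : XN ≤ XNN)
    (uT : X) (huT : uT ∈ XNN) (h_truth : ∀ v ∈ XNN, a uT v = f v)
    (uR : X) (huR : uR ∈ XN) (h_reduced : ∀ v ∈ XN, a uR v = f v)
    (wT : X) (hwT : wT ∈ XNN) (h_dual_truth : ∀ v ∈ XNN, a v wT = -l v)
    (wR : X) (hwR : wR ∈ XN) (h_dual_reduced : ∀ v ∈ XN, a v wR = -l v)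
    (β : ℝ) (hβ : 0 < β)
    (h_infsup : ∀ u ∈ XNN, β * ‖u‖ ≤ dualNormOn XNN (fun v => a u v)) :
    ‖l uT - (l uR - (f wR - a uR wR))‖ ≤
      β⁻¹ * dualNormOn XNN (fun v => -l v - a v wR) *
        dualNormOn XNN (fun v => f v - a uR v) :=
  dual_corrected_output_error_bound_inf_sup_general l hβ h_infsup huT h_truth
    (h_sub huR) (h_sub hwR)
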